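/- arXiv:1509.05810 — 4 statements merged into one kernel-verified Lean document; each statement's English description precedes it below -/
import Mathlib

section
/- Under the weight-matrix assumption and the moment conditions, every weight function w(σ) minimizing Γ(ν(w)) over positive weight functions is proportional to w_min(σ) := (σ² + Γ(A) Γ(B)⁻¹)⁻¹ with probability 1. -/
open MeasureTheory ProbabilityTheory Matrix

noncomputable section

/-- `E[x xᵀ]`, the second moment matrix of the random vector `x`. -/
def secondMoment {Ω : Type*} [MeasurableSpace Ω] {p : ℕ} (μ : Measure Ω)
    (x : Ω → Fin p → ℝ) : Matrix (Fin p) (Fin p) ℝ :=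
  Matrix.of fun j k => ∫ ω, x ω j * x ω k ∂μ

/-- `β = E[x xᵀ]⁻¹ E[x f(x)]`, the slope of the best linear approximation to `f`. -/
def bestLinear {Ω : Type*} [MeasurableSpace Ω] {p : ℕ} (μ : Measure Ω)
    (x : Ω → Fin p → ℝ) (f : (Fin p → ℝ) → ℝ) : Fin p → ℝ :=
  (secondMoment μ x)⁻¹ *ᵥ fun j => ∫ ω, x ω j * f (x ω) ∂μ

/-- `g(v) = f(v) − vᵀ β`, the nonlinear component of `f`. -/
def nonlinPart {Ω : Type*} [MeasurableSpace Ω] {p : ℕ} (μ : Measure Ω)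
    (x : Ω → Fin p → ℝ) (f : (Fin p → ℝ) → ℝ) (v : Fin p → ℝ) : ℝ :=
  f v - v ⬝ᵥ bestLinear μ x f

/-- `E[g(x)² x xᵀ]`. -/
def misspecMoment {Ω : Type*} [MeasurableSpace Ω] {p : ℕ} (μ : Measure Ω)
    (x : Ω → Fin p → ℝ) (f : (Fin p → ℝ) → ℝ) : Matrix (Fin p) (Fin p) ℝ :=
  Matrix.of fun j k => ∫ ω, (nonlinPart μ x f (x ω)) ^ 2 * (x ω j * x ω k) ∂μ

/-- `A = Bᵀ E[g(x)² x xᵀ] B` with `B = E[x xᵀ]⁻¹`. -/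
def matA {Ω : Type*} [MeasurableSpace Ω] {p : ℕ} (μ : Measure Ω)
    (x : Ω → Fin p → ℝ) (f : (Fin p → ℝ) → ℝ) : Matrix (Fin p) (Fin p) ℝ :=
  ((secondMoment μ x)⁻¹)ᵀ * misspecMoment μ x f * (secondMoment μ x)⁻¹

/-- The asymptotic covariance `ν(w)` of the weighted least squares estimator. -/
def asympVar {Ω : Type*} [MeasurableSpace Ω] {p : ℕ} (μ : Measure Ω)
    (x : Ω → Fin p → ℝ) (σ : Ω → ℝ) (f : (Fin p → ℝ) → ℝ) (w : ℝ → ℝ) :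
    Matrix (Fin p) (Fin p) ℝ :=
  ((∫ ω, w (σ ω) ∂μ) ^ 2)⁻¹ •
    ((∫ ω, (w (σ ω)) ^ 2 ∂μ) •
        ((secondMoment μ x)⁻¹ * misspecMoment μ x f * (secondMoment μ x)⁻¹)
      + (∫ ω, (σ ω) ^ 2 * (w (σ ω)) ^ 2 ∂μ) • (secondMoment μ x)⁻¹)

lemma aux_posSemidef {Ω : Type*} [MeasurableSpace Ω] {p : ℕ} (μ : Measure Ω)
    (x : Ω → Fin p → ℝ) (q : Ω → ℝ) (hq : ∀ ω, 0 ≤ q ω)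
    (hi : ∀ j k, Integrable (fun ω => q ω * (x ω j * x ω k)) μ) :
    (Matrix.of fun j k => ∫ ω, q ω * (x ω j * x ω k) ∂μ :
      Matrix (Fin p) (Fin p) ℝ).PosSemidef := by
  refine Matrix.PosSemidef.of_dotProduct_mulVec_nonneg ?_ ?_
  · ext j k
    simp only [Matrix.conjTranspose_apply, Matrix.of_apply, star_trivial]
    congr 1
    ext ω
    ring
  · intro v
    have h1 : star v ⬝ᵥ ((Matrix.of fun j k => ∫ ω, q ω * (x ω j * x ω k) ∂μ :
        Matrix (Fin p) (Fin p) ℝ) *ᵥ v) = ∫ ω, q ω * (∑ j, v j * x ω j) ^ 2 ∂μ := by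
      have h2 : ∀ ω, q ω * (∑ j, v j * x ω j) ^ 2
          = ∑ j, ∑ k, (v j * v k) * (q ω * (x ω j * x ω k)) := by
        intro ω
        rw [sq, Finset.sum_mul_sum, Finset.mul_sum]
        refine Finset.sum_congr rfl fun j _ => ?_
        rw [Finset.mul_sum]
        refine Finset.sum_congr rfl fun k _ => ?_
        ring
      simp_rw [h2]
      rw [integral_finsetSum _ (fun j _ => integrable_finsetSum _ fun k _ => (hi j k).const_mul _)]
      simp only [dotProduct, Matrix.mulVec, Matrix.of_apply, star_trivial]
      refine Finset.sum_congr rfl fun j _ => ?_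
      rw [integral_finsetSum _ (fun k _ => (hi j k).const_mul _), Finset.mul_sum]
      refine Finset.sum_congr rfl fun k _ => ?_
      rw [integral_const_mul]
      ring
    rw [h1]
    exact integral_nonneg fun ω => mul_nonneg (hq ω) (sq_nonneg _)

lemma aux_cs {Ω : Type*} [MeasurableSpace Ω] (μ : Measure Ω)
    (W U V : Ω → ℝ) (hV : ∀ᵐ ω ∂μ, 0 < V ω) (hU : ∀ᵐ ω ∂μ, U ω = (V ω)⁻¹)
    (hW : Integrable W μ) (hUi : Integrable U μ)
    (hWV : Integrable (fun ω => W ω ^ 2 * V ω) μ) (hpos : 0 < ∫ ω, U ω ∂μ)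
    (hle : (∫ ω, W ω ^ 2 * V ω ∂μ) * (∫ ω, U ω ∂μ) ≤ (∫ ω, W ω ∂μ) ^ 2) :
    ∃ c : ℝ, ∀ᵐ ω ∂μ, W ω = c * (V ω)⁻¹ := by
  set I := ∫ ω, U ω ∂μ
  set S := ∫ ω, W ω ∂μ
  set T := ∫ ω, W ω ^ 2 * V ω ∂μ
  refine ⟨S / I, ?_⟩
  set F : Ω → ℝ := fun ω => W ω ^ 2 * V ω - 2 * (S / I) * W ω + (S / I) ^ 2 * U ω
  have hFi : Integrable F μ := (hWV.sub (hW.const_mul _)).add (hUi.const_mul _)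
  have hF : ∀ᵐ ω ∂μ, F ω = (W ω - S / I * (V ω)⁻¹) ^ 2 * V ω := by
    filter_upwards [hV, hU] with ω h1 h2
    simp only [F, h2]
    have := h1.ne'
    have := hpos.ne'
    field_simp
    ring
  have hF0 : 0 ≤ᵐ[μ] F := by
    filter_upwards [hF, hV] with ω h1 h2
    rw [h1]
    exact mul_nonneg (sq_nonneg _) h2.le
  have hint : ∫ ω, F ω ∂μ = T - 2 * (S / I) * S + (S / I) ^ 2 * I := by
    have hsub : Integrable (fun ω => W ω ^ 2 * V ω - 2 * (S / I) * W ω) μ :=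
      hWV.sub (hW.const_mul _)
    simp only [F]
    rw [integral_add hsub (hUi.const_mul _),
      integral_sub hWV (hW.const_mul _), integral_const_mul, integral_const_mul]
  have hle0 : ∫ ω, F ω ∂μ ≤ 0 := by
    rw [hint]
    have : T - 2 * (S / I) * S + (S / I) ^ 2 * I = (T * I - S ^ 2) / I := by
      field_simp
      ring
    rw [this]
    exact div_nonpos_of_nonpos_of_nonneg (by linarith) hpos.le
  have hz : F =ᵐ[μ] 0 :=
    (integral_eq_zero_iff_of_nonneg_ae hF0 hFi).1 (le_antisymm hle0 (integral_nonneg_of_ae hF0))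
  filter_upwards [hz, hF, hV] with ω h1 h2 h3
  rw [h2] at h1
  have h4 : (W ω - S / I * (V ω)⁻¹) ^ 2 = 0 := by
    rcases mul_eq_zero.1 h1 with h | h
    · exact h
    · exact absurd h h3.ne'
  have := pow_eq_zero_iff (two_ne_zero) |>.1 h4
  linarith

lemma aux_pos {Ω : Type*} [MeasurableSpace Ω] (μ : Measure Ω) [IsProbabilityMeasure μ]
    (W : Ω → ℝ) (hW : Integrable W μ) (hp : ∀ ω, 0 < W ω) : 0 < ∫ ω, W ω ∂μ := by
  rw [integral_pos_iff_support_of_nonneg (fun ω => (hp ω).le) hW]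
  have : Function.support W = Set.univ := by
    ext ω
    simp [(hp ω).ne']
  rw [this]
  simp

lemma aux_quad {Ω : Type*} [MeasurableSpace Ω] (μ : Measure Ω) [IsProbabilityMeasure μ]
    (σ W : Ω → ℝ) (hσ : Measurable σ) (hWm : Measurable W)
    (hσ4 : Integrable (fun ω => (σ ω) ^ 4) μ) (hW4 : Integrable (fun ω => (W ω) ^ 4) μ) :
    Integrable W μ ∧ Integrable (fun ω => W ω ^ 2) μ ∧
      Integrable (fun ω => σ ω ^ 2 * W ω ^ 2) μ := by
  have h1 : Integrable (fun _ : Ω => (1 : ℝ)) μ := integrable_const _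
  refine ⟨(h1.add hW4).mono' hWm.aestronglyMeasurable ?_,
    (h1.add hW4).mono' (hWm.pow_const 2).aestronglyMeasurable ?_,
    (hσ4.add hW4).mono' ((hσ.pow_const 2).mul (hWm.pow_const 2)).aestronglyMeasurable ?_⟩
  · refine Filter.Eventually.of_forall fun ω => ?_
    simp only [Real.norm_eq_abs, Pi.add_apply]
    rw [abs_le]
    constructor <;> nlinarith [sq_nonneg (W ω ^ 2 - 1), sq_nonneg (W ω - 1), sq_nonneg (W ω + 1)]
  · refine Filter.Eventually.of_forall fun ω => ?_
    simp only [Real.norm_eq_abs, Pi.add_apply]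
    rw [abs_of_nonneg (by positivity)]
    nlinarith [sq_nonneg (W ω ^ 2 - 1)]
  · refine Filter.Eventually.of_forall fun ω => ?_
    simp only [Real.norm_eq_abs, Pi.add_apply]
    rw [abs_of_nonneg (by positivity)]
    nlinarith [sq_nonneg (W ω ^ 2 - σ ω ^ 2), sq_nonneg (W ω ^ 2), sq_nonneg (σ ω ^ 2)]

/-- Under the moment conditions, every weight function minimizing
`Γ(ν(w))` over positive weight functions (with fourth moments) is proportional to
`w_min(σ) = (σ² + Γ(A) Γ(B)⁻¹)⁻¹` with probability one. -/
theorem argmin_weights_proportional_to_wmin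
    {Ω : Type*} [MeasurableSpace Ω] (μ : Measure Ω) [IsProbabilityMeasure μ] {p : ℕ}
    (x : Ω → Fin p → ℝ) (σ ε : Ω → ℝ) (f : (Fin p → ℝ) → ℝ)
    (hxmeas : Measurable x) (hσmeas : Measurable σ) (hεmeas : Measurable ε)
    (hfmeas : Measurable f)
    (hxσindep : IndepFun x σ μ)
    (hεindep : IndepFun ε (fun ω => (x ω, σ ω)) μ)
    (hεint : Integrable ε μ) (hεmean : ∫ ω, ε ω ∂μ = 0)
    (hεsq : Integrable (fun ω => (ε ω) ^ 2) μ) (hεvar : ∫ ω, (ε ω) ^ 2 ∂μ = 1)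
    (hε4 : Integrable (fun ω => (ε ω) ^ 4) μ)
    (hfull : IsUnit (secondMoment μ x).det)
    (hx8 : ∀ j k : Fin p, Integrable (fun ω => (x ω j) ^ 4 * (x ω k) ^ 4) μ)
    (hxf : ∀ j : Fin p, Integrable (fun ω => x ω j * f (x ω)) μ)
    (hg4 : Integrable (fun ω => (nonlinPart μ x f (x ω)) ^ 4) μ)
    (hσ4 : Integrable (fun ω => (σ ω) ^ 4) μ)
    (σmin : ℝ) (hσmin : 0 < σmin) (hσlb : ∀ᵐ ω ∂μ, σmin ≤ σ ω)
    (Γ : Matrix (Fin p) (Fin p) ℝ →ₗ[ℝ] ℝ)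
    (hΓ : ∀ C : Matrix (Fin p) (Fin p) ℝ, C.PosDef → 0 < Γ C)
    (w : ℝ → ℝ) (hwmeas : Measurable w) (hwpos : ∀ s : ℝ, 0 < w s)
    (hw4 : Integrable (fun ω => (w (σ ω)) ^ 4) μ)
    (hmin : ∀ w' : ℝ → ℝ, Measurable w' → (∀ s : ℝ, 0 < w' s) →
      Integrable (fun ω => (w' (σ ω)) ^ 4) μ →
      Γ (asympVar μ x σ f w) ≤ Γ (asympVar μ x σ f w')) :
    ∃ c : ℝ, ∀ᵐ ω ∂μ,
      w (σ ω) = c * ((σ ω) ^ 2 + Γ (matA μ x f) * (Γ ((secondMoment μ x)⁻¹))⁻¹)⁻¹ := by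
  have hxj : ∀ j, Measurable fun ω => x ω j := fun j => (measurable_pi_apply j).comp hxmeas
  have hgm : Measurable fun ω => nonlinPart μ x f (x ω) := by
    unfold nonlinPart
    refine (hfmeas.comp hxmeas).sub ?_
    simp only [dotProduct]
    exact Finset.measurable_fun_sum _ fun j _ => (hxj j).mul_const _
  have h1 : Integrable (fun _ : Ω => (1 : ℝ)) μ := integrable_const _
  have hM : (secondMoment μ x).PosSemidef := by
    have := aux_posSemidef μ x (fun _ => 1) (fun _ => zero_le_one) (fun j k => by
      refine (h1.add (hx8 j k)).mono' (((hxj j).mul (hxj k)).const_mul 1).aestronglyMeasurable ?_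
      refine Filter.Eventually.of_forall fun ω => ?_
      simp only [Real.norm_eq_abs, Pi.add_apply, one_mul]
      rw [← mul_pow, abs_le]
      generalize x ω j * x ω k = t
      constructor <;> nlinarith [sq_nonneg (t ^ 2 - 1), sq_nonneg (t - 1), sq_nonneg (t + 1)])
    simpa [secondMoment] using this
  have hG : (misspecMoment μ x f).PosSemidef := by
    refine aux_posSemidef μ x (fun ω => (nonlinPart μ x f (x ω)) ^ 2) (fun _ => sq_nonneg _)
      (fun j k => ?_)
    refine ((h1.add (hx8 j k)).add hg4).mono'
      ((hgm.pow_const 2).mul ((hxj j).mul (hxj k))).aestronglyMeasurable ?_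
    refine Filter.Eventually.of_forall fun ω => ?_
    simp only [Real.norm_eq_abs, Pi.add_apply]
    rw [← mul_pow, abs_le]
    generalize x ω j * x ω k = t
    generalize nonlinPart μ x f (x ω) = g
    constructor <;> nlinarith [sq_nonneg (t ^ 2 - 1), sq_nonneg (g ^ 2 - t), sq_nonneg (g ^ 2 + t),
      sq_nonneg (t ^ 2), sq_nonneg (g ^ 2)]
  have hMd : (secondMoment μ x).PosDef := hM.posDef_iff_det_ne_zero.2 hfull.ne_zero
  have hB : ((secondMoment μ x)⁻¹).PosDef := hMd.inv
  have hBt : ((secondMoment μ x)⁻¹)ᵀ = (secondMoment μ x)⁻¹ := by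
    have := hB.isHermitian.eq
    rwa [Matrix.conjTranspose_eq_transpose_of_trivial] at this
  have hA : (matA μ x f).PosSemidef := by
    have := hG.conjTranspose_mul_mul_same (secondMoment μ x)⁻¹
    rwa [Matrix.conjTranspose_eq_transpose_of_trivial] at this
  have hb := hΓ _ hB
  have ha : 0 ≤ Γ (matA μ x f) := by
    by_contra hneg
    push Not at hneg
    have ht : 0 < -Γ (matA μ x f) / Γ ((secondMoment μ x)⁻¹) := div_pos (by linarith) hb
    have h2 := hΓ _ (Matrix.PosDef.posSemidef_add hA (hB.smul ht))
    rw [map_add, map_smul, smul_eq_mul, div_mul_cancel₀ _ hb.ne'] at h2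
    linarith
  have hval : ∀ w' : ℝ → ℝ, Γ (asympVar μ x σ f w') = ((∫ ω, w' (σ ω) ∂μ) ^ 2)⁻¹ *
      ((∫ ω, (w' (σ ω)) ^ 2 ∂μ) * Γ (matA μ x f)
        + (∫ ω, (σ ω) ^ 2 * (w' (σ ω)) ^ 2 ∂μ) * Γ ((secondMoment μ x)⁻¹)) := by
    intro w'
    simp only [asympVar, matA, hBt, map_smul, map_add, smul_eq_mul]
  generalize Γ (matA μ x f) = a at *
  generalize Γ ((secondMoment μ x)⁻¹) = b at *
  have hh : 0 ≤ a * b⁻¹ := by positivity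
  have hab : b * (a * b⁻¹) = a := by field_simp
  generalize a * b⁻¹ = h at *
  have hval2 : ∀ w' : ℝ → ℝ, Measurable w' → Integrable (fun ω => (w' (σ ω)) ^ 4) μ →
      Integrable (fun ω => w' (σ ω)) μ ∧
      Integrable (fun ω => (w' (σ ω)) ^ 2 * (σ ω ^ 2 + h)) μ ∧
      Γ (asympVar μ x σ f w') = ((∫ ω, w' (σ ω) ∂μ) ^ 2)⁻¹ *
        (b * ∫ ω, (w' (σ ω)) ^ 2 * (σ ω ^ 2 + h) ∂μ) := by
    intro w' hm h4
    obtain ⟨i1, i2, i3⟩ := aux_quad μ σ (fun ω => w' (σ ω)) hσmeas (hm.comp hσmeas) hσ4 h4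
    have he : (fun ω => (w' (σ ω)) ^ 2 * (σ ω ^ 2 + h))
        = fun ω => σ ω ^ 2 * (w' (σ ω)) ^ 2 + h * (w' (σ ω)) ^ 2 := by
      ext ω
      ring
    refine ⟨i1, ?_, ?_⟩
    · rw [he]
      exact i3.add (i2.const_mul h)
    · rw [hval, he, integral_add i3 (i2.const_mul h), integral_const_mul, ← hab]
      ring
  set w0 : ℝ → ℝ := fun s => ((max s σmin) ^ 2 + h)⁻¹ with hw0
  have hmx : ∀ s, σmin ^ 2 ≤ (max s σmin) ^ 2 + h := by
    intro s
    have : σmin ^ 2 ≤ (max s σmin) ^ 2 := pow_le_pow_left₀ hσmin.le (le_max_right _ _) 2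
    linarith
  have hs2 : 0 < σmin ^ 2 := by positivity
  have hw0p : ∀ s, 0 < w0 s := fun s => inv_pos.2 (hs2.trans_le (hmx s))
  have hw0m : Measurable w0 :=
    (((measurable_id.max measurable_const).pow_const 2).add_const h).inv
  have hw04 : Integrable (fun ω => (w0 (σ ω)) ^ 4) μ := by
    refine (integrable_const (((σmin ^ 2)⁻¹) ^ 4)).mono'
      ((hw0m.comp hσmeas).pow_const 4).aestronglyMeasurable ?_
    refine Filter.Eventually.of_forall fun ω => ?_
    have h3 := hw0p (σ ω)
    rw [Real.norm_eq_abs, abs_of_nonneg (by positivity)]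
    exact pow_le_pow_left₀ h3.le (inv_anti₀ hs2 (hmx _)) 4
  obtain ⟨i1, i2, e1⟩ := hval2 w hwmeas hw4
  obtain ⟨j1, j2, e2⟩ := hval2 w0 hw0m hw04
  have hle := hmin w0 hw0m hw0p hw04
  have hW := aux_pos μ _ i1 fun ω => hwpos _
  have hU := aux_pos μ _ j1 fun ω => hw0p _
  have hVpos : ∀ᵐ ω ∂μ, 0 < σ ω ^ 2 + h := by
    filter_upwards [hσlb] with ω hω
    have : 0 < σ ω := hσmin.trans_le hω
    positivity
  have hUV : ∀ᵐ ω ∂μ, w0 (σ ω) = (σ ω ^ 2 + h)⁻¹ := by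
    filter_upwards [hσlb] with ω hω
    simp only [hw0, max_eq_left hω]
  have hI : ∫ ω, (w0 (σ ω)) ^ 2 * (σ ω ^ 2 + h) ∂μ = ∫ ω, w0 (σ ω) ∂μ := by
    refine integral_congr_ae ?_
    filter_upwards [hVpos, hUV] with ω h1 h2
    rw [h2]
    have := h1.ne'
    field_simp
  refine aux_cs μ (fun ω => w (σ ω)) (fun ω => w0 (σ ω)) (fun ω => σ ω ^ 2 + h) hVpos hUV
    i1 j1 i2 hU ?_
  rw [e1, e2, hI] at hle
  generalize (∫ ω, w0 (σ ω) ∂μ) = I at *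
  generalize (∫ ω, w (σ ω) ∂μ) = S at *
  generalize (∫ ω, (w (σ ω)) ^ 2 * (σ ω ^ 2 + h) ∂μ) = T at *
  have e3 : (S ^ 2)⁻¹ * (b * T) = b * T / S ^ 2 := by field_simp
  have e4 : (I ^ 2)⁻¹ * (b * I) = b / I := by field_simp
  rw [e3, e4, div_le_div_iff₀ (by positivity) hU] at hle
  have : b * (T * I) ≤ b * S ^ 2 := by linarith
  exact le_of_mul_le_mul_left this hb
end
end

section
/- Under the moment conditions, Γ(ν(w_min)) ≤ min( Γ(ν(1)), Γ(ν(σ⁻²)) ), where w_min(σ) := (σ² + Γ(A) Γ(B)⁻¹)⁻¹, ν(1) is the asymptotic variance of ordinary least squares (weight w ≡ 1) and ν(σ⁻²) that of standard weighted least squares (weight w(σ) = σ⁻²). Moreover the inequality is strict if E[g(x)² x xᵀ] is positive definite and the distribution of σ is not a point mass. -/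
open MeasureTheory ProbabilityTheory Matrix

noncomputable section

theorem aux_psd {Ω : Type*} [MeasurableSpace Ω] (μ : Measure Ω) {p : ℕ}
    (x : Ω → Fin p → ℝ) (q : Ω → ℝ)
    (hi : ∀ j k, Integrable (fun ω => (q ω) ^ 2 * (x ω j * x ω k)) μ) :
    (Matrix.of fun j k => ∫ ω, (q ω) ^ 2 * (x ω j * x ω k) ∂μ :
      Matrix (Fin p) (Fin p) ℝ).PosSemidef := by
  refine Matrix.PosSemidef.of_dotProduct_mulVec_nonneg ?_ ?_
  · ext j k
    simp only [Matrix.conjTranspose_apply, Matrix.of_apply, star_trivial]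
    congr 1; ext ω; ring
  · intro v
    have : star v ⬝ᵥ ((Matrix.of fun j k => ∫ ω, (q ω) ^ 2 * (x ω j * x ω k) ∂μ :
      Matrix (Fin p) (Fin p) ℝ) *ᵥ v) = ∫ ω, (q ω * ∑ j, v j * x ω j) ^ 2 ∂μ := by
      have h1 : ∀ ω, (q ω * ∑ j, v j * x ω j) ^ 2
          = ∑ j, ∑ k, (v j * v k) * ((q ω) ^ 2 * (x ω j * x ω k)) := by
        intro ω
        rw [mul_pow, sq (∑ j, v j * x ω j), Finset.sum_mul_sum, Finset.mul_sum]
        refine Finset.sum_congr rfl fun j _ => ?_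
        rw [Finset.mul_sum]
        refine Finset.sum_congr rfl fun k _ => ?_
        ring
      simp_rw [h1]
      rw [integral_finsetSum _ (fun j _ => integrable_finsetSum _ fun k _ => (hi j k).const_mul _)]
      simp only [dotProduct, Matrix.mulVec, Matrix.of_apply, Pi.star_apply, star_trivial]
      refine Finset.sum_congr rfl fun j _ => ?_
      rw [integral_finsetSum _ (fun k _ => (hi j k).const_mul _), Finset.mul_sum]
      refine Finset.sum_congr rfl fun k _ => ?_
      rw [integral_const_mul]; ring
    rw [this]
    exact integral_nonneg fun ω => sq_nonneg _

/-- Cauchy-Schwarz step. -/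
theorem aux_cs_s4 {Ω : Type*} [MeasurableSpace Ω] (μ : Measure Ω) [IsProbabilityMeasure μ]
    (h u : Ω → ℝ) (hpos : ∀ᵐ ω ∂μ, 0 < h ω)
    (hinv : Integrable (fun ω => (h ω)⁻¹) μ) (hm : 0 < ∫ ω, (h ω)⁻¹ ∂μ)
    (hu : Integrable u μ) (hhu : Integrable (fun ω => h ω * (u ω) ^ 2) μ)
    (hupos : 0 < ∫ ω, u ω ∂μ) :
    (∫ ω, (h ω)⁻¹ ∂μ)⁻¹ ≤ ((∫ ω, u ω ∂μ) ^ 2)⁻¹ * ∫ ω, h ω * (u ω) ^ 2 ∂μ ∧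
    ((¬ ∃ t : ℝ, ∀ᵐ ω ∂μ, h ω * u ω = t) →
      (∫ ω, (h ω)⁻¹ ∂μ)⁻¹ < ((∫ ω, u ω ∂μ) ^ 2)⁻¹ * ∫ ω, h ω * (u ω) ^ 2 ∂μ) := by
  set m := ∫ ω, (h ω)⁻¹ ∂μ with hmdef
  set e := ∫ ω, u ω ∂μ with hedef
  set V := ∫ ω, h ω * (u ω) ^ 2 ∂μ with hVdef
  have hEq : (fun ω => h ω * (u ω - e / m * (h ω)⁻¹) ^ 2) =ᵐ[μ]
      fun ω => h ω * (u ω) ^ 2 - 2 * (e / m) * u ω + (e / m) ^ 2 * (h ω)⁻¹ := by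
    filter_upwards [hpos] with ω hω
    field_simp
    ring
  have hI : Integrable (fun ω => h ω * (u ω) ^ 2 - 2 * (e / m) * u ω + (e / m) ^ 2 * (h ω)⁻¹) μ :=
    (hhu.sub (hu.const_mul _)).add (hinv.const_mul _)
  have hval : ∫ ω, h ω * (u ω - e / m * (h ω)⁻¹) ^ 2 ∂μ = V - e ^ 2 / m := by
    have hI2 : Integrable (fun ω => h ω * (u ω) ^ 2 - 2 * (e / m) * u ω) μ :=
      hhu.sub (hu.const_mul _)
    rw [integral_congr_ae hEq, integral_add hI2 (hinv.const_mul _),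
      integral_sub hhu (hu.const_mul _), integral_const_mul, integral_const_mul]
    rw [← hmdef, ← hedef, ← hVdef]
    field_simp
    ring
  have hnn : 0 ≤ᵐ[μ] (fun ω => h ω * (u ω - e / m * (h ω)⁻¹) ^ 2) := by
    filter_upwards [hpos] with ω hω
    simp only [Pi.zero_apply]
    positivity
  have hI' : Integrable (fun ω => h ω * (u ω - e / m * (h ω)⁻¹) ^ 2) μ := hI.congr hEq.symm
  have h0 := integral_nonneg_of_ae hnn
  have key : (e ^ 2)⁻¹ * V - m⁻¹ = (e ^ 2)⁻¹ * (V - e ^ 2 / m) := by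
    field_simp
  have he : 0 < (e ^ 2)⁻¹ := by positivity
  refine ⟨?_, fun hne => ?_⟩
  · rw [hval] at h0
    have := mul_nonneg he.le h0
    linarith
  · have h1 : 0 < V - e ^ 2 / m := by
      rw [← hval]
      refine lt_of_le_of_ne h0 fun hz => hne ⟨e / m, ?_⟩
      have := (integral_eq_zero_iff_of_nonneg_ae hnn hI').1 hz.symm
      filter_upwards [this, hpos] with ω h2 hω
      simp only [Pi.zero_apply] at h2
      have h3 : u ω - e / m * (h ω)⁻¹ = 0 := by
        rcases mul_eq_zero.1 h2 with h | h
        · exact absurd h hω.ne'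
        · exact pow_eq_zero_iff (two_ne_zero) |>.1 h
      have h4 : u ω = e / m * (h ω)⁻¹ := by linarith
      rw [h4]; field_simp
    have := mul_pos he h1
    linarith

theorem aux_bdd {Ω : Type*} [MeasurableSpace Ω] (μ : Measure Ω) [IsProbabilityMeasure μ]
    (u : Ω → ℝ) (hu : Measurable u) (C : ℝ) (h : ∀ᵐ ω ∂μ, 0 < u ω ∧ u ω ≤ C) :
    Integrable u μ ∧ 0 < ∫ ω, u ω ∂μ := by
  have hi : Integrable u μ := by
    refine Integrable.of_bound hu.aestronglyMeasurable C ?_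
    filter_upwards [h] with ω hω
    rw [Real.norm_eq_abs, abs_of_pos hω.1]; exact hω.2
  refine ⟨hi, ?_⟩
  have hnn : 0 ≤ᵐ[μ] u := by filter_upwards [h] with ω hω; exact hω.1.le
  refine lt_of_le_of_ne (integral_nonneg_of_ae hnn) fun hz => ?_
  have := (integral_eq_zero_iff_of_nonneg_ae hnn hi).1 hz.symm
  have hF : ∀ᵐ ω ∂μ, False := by
    filter_upwards [this, h] with ω h1 h2
    simp only [Pi.zero_apply] at h1
    linarith [h2.1]
  have := hF.exists
  simp at this

theorem aux_scalar {Ω : Type*} [MeasurableSpace Ω] (μ : Measure Ω) [IsProbabilityMeasure μ]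
    (σ : Ω → ℝ) (hσ : Measurable σ) (hσ4 : Integrable (fun ω => (σ ω) ^ 4) μ)
    (σmin : ℝ) (hσmin : 0 < σmin) (hσlb : ∀ᵐ ω ∂μ, σmin ≤ σ ω)
    (a b : ℝ) (ha : 0 ≤ a) (hb : 0 < b) (V : (ℝ → ℝ) → ℝ)
    (hV : ∀ w, V w = ((∫ ω, w (σ ω) ∂μ) ^ 2)⁻¹ *
      ((∫ ω, (w (σ ω)) ^ 2 ∂μ) * a + (∫ ω, (σ ω) ^ 2 * (w (σ ω)) ^ 2 ∂μ) * b))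
    (wmin : ℝ → ℝ) (hwmin : ∀ s, wmin s = (s ^ 2 + a * b⁻¹)⁻¹) :
    V wmin ≤ min (V (fun _ => 1)) (V (fun s => (s ^ 2)⁻¹)) ∧
    (0 < a → (¬ ∃ c : ℝ, ∀ᵐ ω ∂μ, σ ω = c) →
      V wmin < min (V (fun _ => 1)) (V (fun s => (s ^ 2)⁻¹))) := by
  set c := a * b⁻¹ with hc
  have hc0 : 0 ≤ c := by positivity
  have hab : a = b * c := by rw [hc]; field_simp
  have hσ2 : Integrable (fun ω => (σ ω) ^ 2) μ := by
    refine ((integrable_const (1:ℝ)).add hσ4).mono' (by fun_prop) (.of_forall fun ω => ?_)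
    rw [Real.norm_eq_abs, abs_of_nonneg (sq_nonneg _)]
    simp only [Pi.add_apply]
    nlinarith [sq_nonneg ((σ ω) ^ 2 - 1), sq_nonneg (σ ω)]
  have hsq : ∀ᵐ ω ∂μ, σmin ^ 2 ≤ (σ ω) ^ 2 := by
    filter_upwards [hσlb] with ω hω
    gcongr
  have hm2 : 0 < σmin ^ 2 := by positivity
  have hpos : ∀ᵐ ω ∂μ, 0 < (σ ω) ^ 2 + c := by
    filter_upwards [hsq] with ω hω
    linarith
  obtain ⟨hinv, hm⟩ := aux_bdd μ (fun ω => ((σ ω) ^ 2 + c)⁻¹) (by fun_prop) (σmin ^ 2)⁻¹ (by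
    filter_upwards [hsq] with ω hω
    exact ⟨inv_pos.2 (by linarith), inv_anti₀ hm2 (by linarith)⟩)
  have hVw : ∀ w : ℝ → ℝ, Integrable (fun ω => (w (σ ω)) ^ 2) μ →
      Integrable (fun ω => (σ ω) ^ 2 * (w (σ ω)) ^ 2) μ →
      Integrable (fun ω => ((σ ω) ^ 2 + c) * (w (σ ω)) ^ 2) μ ∧
      V w = b * (((∫ ω, w (σ ω) ∂μ) ^ 2)⁻¹ * ∫ ω, ((σ ω) ^ 2 + c) * (w (σ ω)) ^ 2 ∂μ) := by
    intro w h1 h2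
    have e1 : (fun ω => ((σ ω) ^ 2 + c) * (w (σ ω)) ^ 2)
      = fun ω => (σ ω) ^ 2 * (w (σ ω)) ^ 2 + c * (w (σ ω)) ^ 2 := by ext ω; ring
    rw [e1]
    refine ⟨h2.add (h1.const_mul c), ?_⟩
    rw [integral_add h2 (h1.const_mul c), integral_const_mul, hV, hab]
    ring
  -- value at wmin
  have hmin : V wmin = b * (∫ ω, ((σ ω) ^ 2 + c)⁻¹ ∂μ)⁻¹ := by
    have hw2 : Integrable (fun ω => (wmin (σ ω)) ^ 2) μ := by
      simp_rw [hwmin]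
      refine (aux_bdd μ _ (by fun_prop) ((σmin ^ 2)⁻¹ ^ 2) ?_).1
      filter_upwards [hsq] with ω hω
      have h1 : 0 < ((σ ω) ^ 2 + c)⁻¹ := inv_pos.2 (by linarith)
      exact ⟨by positivity, pow_le_pow_left₀ h1.le (inv_anti₀ hm2 (by linarith)) 2⟩
    have hw3 : Integrable (fun ω => (σ ω) ^ 2 * (wmin (σ ω)) ^ 2) μ := by
      simp_rw [hwmin]
      refine hinv.mono' (by fun_prop) ?_
      filter_upwards [hpos] with ω hω
      rw [Real.norm_eq_abs, abs_of_nonneg (by positivity)]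
      have : ((σ ω) ^ 2 + c)⁻¹ = ((σ ω) ^ 2 + c) * (((σ ω) ^ 2 + c)⁻¹) ^ 2 := by field_simp
      conv_rhs => rw [this]
      gcongr
      linarith
    rw [(hVw wmin hw2 hw3).2]
    have : ∫ ω, ((σ ω) ^ 2 + c) * (wmin (σ ω)) ^ 2 ∂μ = ∫ ω, ((σ ω) ^ 2 + c)⁻¹ ∂μ := by
      refine integral_congr_ae ?_
      filter_upwards [hpos] with ω hω
      rw [hwmin]; field_simp
    rw [this]
    simp_rw [hwmin]
    field_simp
  have hw1 := hVw (fun _ => 1) (by simp) (by simpa using hσ2)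
  have hb2 := aux_bdd μ (fun ω => ((σ ω) ^ 2)⁻¹) (by fun_prop) (σmin ^ 2)⁻¹ (by
    filter_upwards [hsq] with ω hω
    exact ⟨inv_pos.2 (by linarith), inv_anti₀ hm2 (by linarith)⟩)
  have hw2 := hVw (fun s => (s ^ 2)⁻¹) (by
      refine (aux_bdd μ _ (by fun_prop) ((σmin ^ 2)⁻¹ ^ 2) ?_).1
      filter_upwards [hsq] with ω hω
      have h1 : 0 < ((σ ω) ^ 2)⁻¹ := inv_pos.2 (by linarith)
      exact ⟨by positivity, pow_le_pow_left₀ h1.le (inv_anti₀ hm2 (by linarith)) 2⟩) (by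
      refine hb2.1.congr ?_
      filter_upwards [hsq] with ω hω
      have h1 : 0 < (σ ω) ^ 2 := by linarith
      have h2 : σ ω ≠ 0 := fun h => by simp [h] at h1
      field_simp)
  have c1 := aux_cs_s4 μ (fun ω => (σ ω) ^ 2 + c) (fun _ => 1) hpos hinv hm (by simp) hw1.1 (by simp)
  have c2 := aux_cs_s4 μ (fun ω => (σ ω) ^ 2 + c) (fun ω => ((σ ω) ^ 2)⁻¹) hpos hinv hm hb2.1 hw2.1 hb2.2
  have hconst : ∀ t : ℝ, (∀ᵐ ω ∂μ, (σ ω) ^ 2 = t) → ∃ c : ℝ, ∀ᵐ ω ∂μ, σ ω = c := by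
    intro t ht
    refine ⟨√t, ?_⟩
    filter_upwards [ht, hσlb] with ω h1 h2
    rw [← h1, Real.sqrt_sq (by linarith)]
  rw [hmin, hw1.2, hw2.2]
  refine ⟨le_min ?_ ?_, fun ha' hne => lt_min ?_ ?_⟩
  · exact mul_le_mul_of_nonneg_left c1.1 hb.le
  · exact mul_le_mul_of_nonneg_left c2.1 hb.le
  · refine mul_lt_mul_of_pos_left (c1.2 ?_) hb
    rintro ⟨t, ht⟩
    refine hne (hconst (t - c) ?_)
    filter_upwards [ht] with ω h
    linarith
  · refine mul_lt_mul_of_pos_left (c2.2 ?_) hb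
    rintro ⟨t, ht⟩
    have hcp : 0 < c := by positivity
    refine hne (hconst (c / (t - 1)) ?_)
    filter_upwards [ht, hsq] with ω h h'
    have h1 : 0 < (σ ω) ^ 2 := by linarith
    have h2 : t - 1 = c * ((σ ω) ^ 2)⁻¹ := by
      rw [← h, add_mul, mul_inv_cancel₀ h1.ne']; ring
    rw [h2]
    field_simp

/-- `Γ(ν(w_min)) ≤ min(Γ(ν(1)), Γ(ν(σ⁻²)))` where
`w_min(σ) = (σ² + Γ(A) Γ(B)⁻¹)⁻¹`, with strict inequality if `E[g(x)² x xᵀ]` is positive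
definite and the distribution of `σ` is not a point mass. -/
theorem wmin_improves_on_ols_and_wls
    {Ω : Type*} [MeasurableSpace Ω] (μ : Measure Ω) [IsProbabilityMeasure μ] {p : ℕ}
    (x : Ω → Fin p → ℝ) (σ ε : Ω → ℝ) (f : (Fin p → ℝ) → ℝ)
    (hxmeas : Measurable x) (hσmeas : Measurable σ) (hεmeas : Measurable ε)
    (hfmeas : Measurable f)
    (hxσindep : IndepFun x σ μ)
    (hεindep : IndepFun ε (fun ω => (x ω, σ ω)) μ)
    (hεint : Integrable ε μ) (hεmean : ∫ ω, ε ω ∂μ = 0)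
    (hεsq : Integrable (fun ω => (ε ω) ^ 2) μ) (hεvar : ∫ ω, (ε ω) ^ 2 ∂μ = 1)
    (hε4 : Integrable (fun ω => (ε ω) ^ 4) μ)
    (hfull : IsUnit (secondMoment μ x).det)
    (hx8 : ∀ j k : Fin p, Integrable (fun ω => (x ω j) ^ 4 * (x ω k) ^ 4) μ)
    (hxf : ∀ j : Fin p, Integrable (fun ω => x ω j * f (x ω)) μ)
    (hg4 : Integrable (fun ω => (nonlinPart μ x f (x ω)) ^ 4) μ)
    (hσ4 : Integrable (fun ω => (σ ω) ^ 4) μ)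
    (σmin : ℝ) (hσmin : 0 < σmin) (hσlb : ∀ᵐ ω ∂μ, σmin ≤ σ ω)
    (Γ : Matrix (Fin p) (Fin p) ℝ →ₗ[ℝ] ℝ)
    (hΓ : ∀ C : Matrix (Fin p) (Fin p) ℝ, C.PosDef → 0 < Γ C)
    (wmin : ℝ → ℝ)
    (hwmin : ∀ s : ℝ,
      wmin s = (s ^ 2 + Γ (matA μ x f) * (Γ ((secondMoment μ x)⁻¹))⁻¹)⁻¹) :
    Γ (asympVar μ x σ f wmin)
        ≤ min (Γ (asympVar μ x σ f (fun _ => 1)))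
            (Γ (asympVar μ x σ f (fun s => (s ^ 2)⁻¹))) ∧
      ((misspecMoment μ x f).PosDef → (¬ ∃ c : ℝ, ∀ᵐ ω ∂μ, σ ω = c) →
        Γ (asympVar μ x σ f wmin)
          < min (Γ (asympVar μ x σ f (fun _ => 1)))
              (Γ (asympVar μ x σ f (fun s => (s ^ 2)⁻¹)))) := by
  have hxm : ∀ j, Measurable (fun ω => x ω j) := fun j => (measurable_pi_apply j).comp hxmeas
  have hgm : Measurable (fun ω => nonlinPart μ x f (x ω)) := by
    unfold nonlinPart
    simp only [dotProduct]
    refine (hfmeas.comp hxmeas).sub ?_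
    exact Finset.measurable_sum _ fun j _ => (hxm j).mul_const _
  have hiS : ∀ j k, Integrable (fun ω => x ω j * x ω k) μ := by
    intro j k
    refine ((integrable_const (1:ℝ)).add (hx8 j k)).mono'
      ((hxm j).mul (hxm k)).aestronglyMeasurable (.of_forall fun ω => ?_)
    rw [Real.norm_eq_abs, abs_le]
    simp only [Pi.add_apply]
    constructor <;> nlinarith [sq_nonneg ((x ω j * x ω k) ^ 2 - 1), sq_nonneg (x ω j * x ω k - 1),
      sq_nonneg (x ω j * x ω k + 1)]
  have hiM : ∀ j k, Integrable (fun ω => (nonlinPart μ x f (x ω)) ^ 2 * (x ω j * x ω k)) μ := by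
    intro j k
    refine (((integrable_const (1:ℝ)).add (hx8 j k)).add hg4).mono'
      ((hgm.pow_const 2).mul ((hxm j).mul (hxm k))).aestronglyMeasurable (.of_forall fun ω => ?_)
    rw [Real.norm_eq_abs, abs_le]
    simp only [Pi.add_apply]
    generalize nonlinPart μ x f (x ω) = g
    have e : (x ω j) ^ 4 * (x ω k) ^ 4 = (x ω j * x ω k) ^ 4 := by ring
    rw [e]
    generalize x ω j * x ω k = y
    constructor <;> nlinarith [sq_nonneg (y ^ 2 - 1), sq_nonneg (g ^ 2 - y), sq_nonneg (g ^ 2 + y),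
      sq_nonneg y, sq_nonneg (g ^ 2)]
  have hSpsd : (secondMoment μ x).PosSemidef := by
    have := aux_psd μ x (fun _ => 1) (by simpa using hiS)
    simpa [secondMoment] using this
  have hMpsd : (misspecMoment μ x f).PosSemidef := aux_psd μ x _ hiM
  have hSpd : (secondMoment μ x).PosDef :=
    hSpsd.posDef_iff_isUnit.2 ((Matrix.isUnit_iff_isUnit_det _).2 hfull)
  have hB : ((secondMoment μ x)⁻¹).PosDef := hSpd.inv
  have hBt : ((secondMoment μ x)⁻¹)ᵀ = (secondMoment μ x)⁻¹ := by
    have := hB.isHermitian.eq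
    rwa [Matrix.conjTranspose_eq_transpose_of_trivial] at this
  have hApsd : (matA μ x f).PosSemidef := by
    have := hMpsd.conjTranspose_mul_mul_same ((secondMoment μ x)⁻¹)
    rwa [Matrix.conjTranspose_eq_transpose_of_trivial] at this
  have hb := hΓ _ hB
  have ha : 0 ≤ Γ (matA μ x f) := by
    by_contra hneg
    push Not at hneg
    have ht : 0 < -Γ (matA μ x f) / Γ ((secondMoment μ x)⁻¹) := div_pos (by linarith) hb
    have h1 := hΓ _ (Matrix.PosDef.posSemidef_add hApsd (hB.smul ht))
    rw [map_add, map_smul, smul_eq_mul, div_mul_cancel₀ _ hb.ne'] at h1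
    linarith
  have hap : (misspecMoment μ x f).PosDef → 0 < Γ (matA μ x f) := by
    intro hM
    apply hΓ
    have hinj : Function.Injective ((secondMoment μ x)⁻¹).mulVec :=
      Matrix.mulVec_injective_of_isUnit hB.isUnit
    have := hM.conjTranspose_mul_mul_same hinj
    rwa [Matrix.conjTranspose_eq_transpose_of_trivial] at this
  have hV : ∀ w, Γ (asympVar μ x σ f w) = ((∫ ω, w (σ ω) ∂μ) ^ 2)⁻¹ *
      ((∫ ω, (w (σ ω)) ^ 2 ∂μ) * Γ (matA μ x f)
        + (∫ ω, (σ ω) ^ 2 * (w (σ ω)) ^ 2 ∂μ) * Γ ((secondMoment μ x)⁻¹)) := by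
    intro w
    rw [asympVar, map_smul, map_add, map_smul, map_smul, matA, hBt]
    simp only [smul_eq_mul]
  have := aux_scalar μ σ hσmeas hσ4 σmin hσmin hσlb _ _ ha hb
    (fun w => Γ (asympVar μ x σ f w)) hV wmin hwmin
  exact ⟨this.1, fun hM hne => this.2 (hap hM) hne⟩
end
end

section
/- Suppose x ∈ ℝ^p and σ ∈ ℝ are possibly dependent random variables, (x_i, σ_i) are i.i.d. copies, y_i = f(x_i) + σ_i ε_i with ε_i i.i.d. mean 0 variance 1 independent of (x_i, σ_i), and W is the diagonal weight matrix with W_ii = w(σ_i) for a fixed function w. If E[x xᵀ w(σ)], E[w(σ) x f(x)], and E[x w(σ) σ] exist, E[x xᵀ] is positive definite, and E[x xᵀ w(σ)] is invertible, then β̂(W) := (Xᵀ W X)⁻¹ Xᵀ W Y converges almost surely to E[x xᵀ w(σ)]⁻¹ E[w(σ) x f(x)] as n → ∞. -/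
open MeasureTheory ProbabilityTheory Matrix Filter Topology

noncomputable section

/-- The `n × p` design matrix with rows `x_iᵀ`. -/
def designMatrix {Ω : Type*} {p : ℕ} (x : ℕ → Ω → Fin p → ℝ) (n : ℕ) (ω : Ω) :
    Matrix (Fin n) (Fin p) ℝ :=
  Matrix.of fun i j => x (i : ℕ) ω j

/-- The weighted least squares estimator `β̂(W) = (Xᵀ W X)⁻¹ Xᵀ W Y` with diagonal
weights `W_ii`. -/
def wlsEstimator {Ω : Type*} {p : ℕ} (x : ℕ → Ω → Fin p → ℝ) (y : ℕ → Ω → ℝ)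
    (What : (n : ℕ) → Ω → Fin n → ℝ) (n : ℕ) (ω : Ω) : Fin p → ℝ :=
  ((designMatrix x n ω)ᵀ * Matrix.diagonal (What n ω) * designMatrix x n ω)⁻¹ *ᵥ
    ((designMatrix x n ω)ᵀ *ᵥ (Matrix.diagonal (What n ω) *ᵥ fun i : Fin n => y (i : ℕ) ω))

/-- Scaled design statistics converge, hence so does the least squares solution. -/
lemma tendsto_inv_mulVec_of_scaled {p : ℕ} (G : ℕ → Matrix (Fin p) (Fin p) ℝ)
    (v : ℕ → Fin p → ℝ) (A : Matrix (Fin p) (Fin p) ℝ) (b : Fin p → ℝ)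
    (hA : IsUnit A.det)
    (hG : ∀ j k, Tendsto (fun n : ℕ => G n j k / n) atTop (𝓝 (A j k)))
    (hv : ∀ j, Tendsto (fun n : ℕ => v n j / n) atTop (𝓝 (b j))) :
    Tendsto (fun n => (G n)⁻¹ *ᵥ v n) atTop (𝓝 (A⁻¹ *ᵥ b)) := by
  have hG' : Tendsto (fun n : ℕ => (n : ℝ)⁻¹ • G n) atTop (𝓝 A) := by
    refine tendsto_pi_nhds.2 fun j => tendsto_pi_nhds.2 fun k => ?_
    refine (hG j k).congr fun n => ?_
    simp [div_eq_inv_mul]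
  have hv' : Tendsto (fun n : ℕ => (n : ℝ)⁻¹ • v n) atTop (𝓝 b) := by
    refine tendsto_pi_nhds.2 fun j => ?_
    refine (hv j).congr fun n => ?_
    simp [div_eq_inv_mul]
  have hdet : Tendsto (fun n : ℕ => ((n : ℝ)⁻¹ • G n).det) atTop (𝓝 A.det) :=
    ((continuous_id.matrix_det).tendsto A).comp hG'
  have hadj : Tendsto (fun n : ℕ => ((n : ℝ)⁻¹ • G n).adjugate) atTop (𝓝 A.adjugate) :=
    ((continuous_id.matrix_adjugate).tendsto A).comp hG'
  have hinv : Tendsto (fun n : ℕ => ((n : ℝ)⁻¹ • G n)⁻¹) atTop (𝓝 A⁻¹) := by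
    simp only [Matrix.inv_def, Ring.inverse_eq_inv']
    exact (hdet.inv₀ hA.ne_zero).smul hadj
  have hmul : Tendsto (fun n : ℕ => ((n : ℝ)⁻¹ • G n)⁻¹ *ᵥ ((n : ℝ)⁻¹ • v n)) atTop
      (𝓝 (A⁻¹ *ᵥ b)) := by
    refine tendsto_pi_nhds.2 fun j => ?_
    simp only [Matrix.mulVec, dotProduct]
    refine tendsto_finsetSum _ fun k _ => ?_
    exact (tendsto_pi_nhds.1 (tendsto_pi_nhds.1 hinv j) k).mul (tendsto_pi_nhds.1 hv' k)
  refine hmul.congr' ?_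
  filter_upwards [eventually_gt_atTop 0, hdet.eventually_ne hA.ne_zero] with n hn hd
  have hn' : (n : ℝ) ≠ 0 := by exact_mod_cast hn.ne'
  have hGn : IsUnit (G n).det := by
    rw [isUnit_iff_ne_zero]
    intro h0
    apply hd
    rw [Matrix.det_smul, h0, mul_zero]
  have hu := Matrix.inv_smul' (G n) (Units.mk0 (n : ℝ)⁻¹ (inv_ne_zero hn')) hGn
  have hu' : ((n : ℝ)⁻¹ • G n)⁻¹ = (n : ℝ) • (G n)⁻¹ := by
    simpa [Units.smul_def] using hu
  rw [hu', Matrix.smul_mulVec, Matrix.mulVec_smul, smul_smul, mul_inv_cancel₀ hn', one_smul]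

/-- When `x` and `σ` may be dependent, the weighted least squares
estimator with weights `w(σ_i)` converges almost surely to
`E[x xᵀ w(σ)]⁻¹ E[w(σ) x f(x)]` (which need not equal `β`). -/
theorem wls_limit_dependent_errors
    {Ω : Type*} [MeasurableSpace Ω] (μ : Measure Ω) [IsProbabilityMeasure μ] {p : ℕ}
    (x : ℕ → Ω → Fin p → ℝ) (σ ε : ℕ → Ω → ℝ) (f : (Fin p → ℝ) → ℝ) (w : ℝ → ℝ)
    (y : ℕ → Ω → ℝ)
    (hy : ∀ i ω, y i ω = f (x i ω) + σ i ω * ε i ω)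
    (hxmeas : ∀ i, Measurable (x i)) (hσmeas : ∀ i, Measurable (σ i))
    (hεmeas : ∀ i, Measurable (ε i)) (hfmeas : Measurable f) (hwmeas : Measurable w)
    (hindep : iIndepFun (fun i ω => (x i ω, σ i ω, ε i ω)) μ)
    (hident : ∀ i, IdentDistrib (fun ω => (x i ω, σ i ω, ε i ω))
      (fun ω => (x 0 ω, σ 0 ω, ε 0 ω)) μ μ)
    (hεindep : ∀ i, IndepFun (ε i) (fun ω => (x i ω, σ i ω)) μ)
    (hεint : Integrable (ε 0) μ) (hεmean : ∫ ω, ε 0 ω ∂μ = 0)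
    (hεsq : Integrable (fun ω => (ε 0 ω) ^ 2) μ) (hεvar : ∫ ω, (ε 0 ω) ^ 2 ∂μ = 1)
    (hxxw : ∀ j k : Fin p, Integrable (fun ω => x 0 ω j * x 0 ω k * w (σ 0 ω)) μ)
    (hwxf : ∀ j : Fin p, Integrable (fun ω => w (σ 0 ω) * x 0 ω j * f (x 0 ω)) μ)
    (hxwσ : ∀ j : Fin p, Integrable (fun ω => x 0 ω j * w (σ 0 ω) * σ 0 ω) μ)
    (hposdef : (secondMoment μ (x 0)).PosDef)
    (hWinv : IsUnit
      (Matrix.of fun j k => ∫ ω, x 0 ω j * x 0 ω k * w (σ 0 ω) ∂μ :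
        Matrix (Fin p) (Fin p) ℝ).det) :
    ∀ᵐ ω ∂μ,
      Tendsto (fun n => wlsEstimator x y (fun _ ω' i => w (σ (i : ℕ) ω')) n ω) atTop
        (𝓝 ((Matrix.of fun j k => ∫ ω', x 0 ω' j * x 0 ω' k * w (σ 0 ω') ∂μ :
              Matrix (Fin p) (Fin p) ℝ)⁻¹ *ᵥ
            fun j => ∫ ω', w (σ 0 ω') * x 0 ω' j * f (x 0 ω') ∂μ)) := by
  -- strong law for measurable functions of the triples
  have slln : ∀ g : (Fin p → ℝ) × ℝ × ℝ → ℝ, Measurable g →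
      Integrable (fun ω => g (x 0 ω, σ 0 ω, ε 0 ω)) μ →
      ∀ᵐ ω ∂μ, Tendsto (fun n : ℕ =>
        (∑ i ∈ Finset.range n, g (x i ω, σ i ω, ε i ω)) / n) atTop
        (𝓝 (∫ ω, g (x 0 ω, σ 0 ω, ε 0 ω) ∂μ)) := by
    intro g hg hint
    refine strong_law_ae_real (fun i ω => g (x i ω, σ i ω, ε i ω)) hint ?_ ?_
    · intro i j hij
      exact (hindep.indepFun hij).comp hg hg
    · intro i
      exact (hident i).comp hg
  have hind : ∀ j, IndepFun (fun ω => x 0 ω j * w (σ 0 ω) * σ 0 ω) (ε 0) μ := by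
    intro j
    have hg : Measurable fun q : (Fin p → ℝ) × ℝ => q.1 j * w q.2 * q.2 := by fun_prop
    exact ((hεindep 0).comp measurable_id hg).symm
  have hnoise : ∀ j, Integrable (fun ω => x 0 ω j * w (σ 0 ω) * σ 0 ω * ε 0 ω) μ :=
    fun j => (hind j).integrable_mul (hxwσ j) hεint
  have hnoise0 : ∀ j, ∫ ω, x 0 ω j * w (σ 0 ω) * σ 0 ω * ε 0 ω ∂μ = 0 := by
    intro j
    have h := (hind j).integral_mul_eq_mul_integral (hxwσ j).aestronglyMeasurable
      hεint.aestronglyMeasurable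
    rw [hεmean, mul_zero] at h
    exact h
  have h1 : ∀ j k : Fin p, ∀ᵐ ω ∂μ, Tendsto (fun n : ℕ =>
      (∑ i ∈ Finset.range n, x i ω j * x i ω k * w (σ i ω)) / n) atTop
      (𝓝 (∫ ω, x 0 ω j * x 0 ω k * w (σ 0 ω) ∂μ)) := fun j k =>
    slln (fun q => q.1 j * q.1 k * w q.2.1) (by fun_prop) (hxxw j k)
  have h2 : ∀ j : Fin p, ∀ᵐ ω ∂μ, Tendsto (fun n : ℕ =>
      (∑ i ∈ Finset.range n, (w (σ i ω) * x i ω j * f (x i ω)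
        + x i ω j * w (σ i ω) * σ i ω * ε i ω)) / n) atTop
      (𝓝 (∫ ω, w (σ 0 ω) * x 0 ω j * f (x 0 ω) ∂μ)) := by
    intro j
    have h := slln (fun q => w q.2.1 * q.1 j * f q.1 + q.1 j * w q.2.1 * q.2.1 * q.2.2)
      (by fun_prop) ((hwxf j).add (hnoise j))
    have e : ∫ ω, (w (σ 0 ω) * x 0 ω j * f (x 0 ω)
        + x 0 ω j * w (σ 0 ω) * σ 0 ω * ε 0 ω) ∂μ
        = ∫ ω, w (σ 0 ω) * x 0 ω j * f (x 0 ω) ∂μ := by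
      rw [integral_add (hwxf j) (hnoise j), hnoise0, add_zero]
    rw [← e]
    exact h
  filter_upwards [ae_all_iff.2 fun j => ae_all_iff.2 (h1 j), ae_all_iff.2 h2] with ω k1 k2
  unfold wlsEstimator
  refine tendsto_inv_mulVec_of_scaled _ _ _ _ hWinv ?_ ?_
  · intro j k
    refine (k1 j k).congr fun n => ?_
    congr 1
    rw [Matrix.mul_apply, Finset.sum_range]
    refine Finset.sum_congr rfl fun i _ => ?_
    rw [Matrix.mul_diagonal]
    simp only [designMatrix, Matrix.transpose_apply, Matrix.of_apply]
    ring
  · intro j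
    refine (k2 j).congr fun n => ?_
    congr 1
    rw [Finset.sum_range]
    refine Finset.sum_congr rfl fun i _ => ?_
    rw [Matrix.mulVec_diagonal]
    simp only [designMatrix, Matrix.transpose_apply, Matrix.of_apply, hy]
    ring
end
end

section
/- Let x ∈ ℝ^p and σ ∈ ℝ be independent random variables, ε independent of (x, σ) with E[ε] = 0 and E[ε²] = 1, y = f(x) + σ ε, β := E[x xᵀ]⁻¹ E[x f(x)], g(x) := f(x) − xᵀβ, and w a function of σ, assuming all the expectations below are finite. Then E[(g(x)² + σ²) w(σ)² x xᵀ] = E[(y − xᵀβ)² w(σ)² x xᵀ], and consequently the asymptotic variance admits the representation ν(w) = B E[(y − xᵀβ)² w(σ)² x xᵀ] B / E[w(σ)]² with B := E[x xᵀ]⁻¹. -/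
open MeasureTheory ProbabilityTheory Matrix

noncomputable section

/-- With `y = f(x) + σ ε`, `E[(g(x)² + σ²) w(σ)² x xᵀ]`
`= E[(y − xᵀβ)² w(σ)² x xᵀ]`, and consequently the asymptotic variance admits the
representation `ν(w) = B E[(y − xᵀβ)² w(σ)² x xᵀ] B / E[w(σ)]²` with `B = E[x xᵀ]⁻¹`. -/
theorem asympVar_residual_representation
    {Ω : Type*} [MeasurableSpace Ω] (μ : Measure Ω) [IsProbabilityMeasure μ] {p : ℕ}
    (x : Ω → Fin p → ℝ) (σ ε : Ω → ℝ) (f : (Fin p → ℝ) → ℝ) (w : ℝ → ℝ) (y : Ω → ℝ)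
    (hy : ∀ ω, y ω = f (x ω) + σ ω * ε ω)
    (hxmeas : Measurable x) (hσmeas : Measurable σ) (hεmeas : Measurable ε)
    (hfmeas : Measurable f) (hwmeas : Measurable w)
    (hxσindep : IndepFun x σ μ)
    (hεindep : IndepFun ε (fun ω => (x ω, σ ω)) μ)
    (hεint : Integrable ε μ) (hεmean : ∫ ω, ε ω ∂μ = 0)
    (hεsq : Integrable (fun ω => (ε ω) ^ 2) μ) (hεvar : ∫ ω, (ε ω) ^ 2 ∂μ = 1)
    (hfull : IsUnit (secondMoment μ x).det)
    (hxx : ∀ j k : Fin p, Integrable (fun ω => x ω j * x ω k) μ)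
    (hxf : ∀ j : Fin p, Integrable (fun ω => x ω j * f (x ω)) μ)
    (hw : Integrable (fun ω => w (σ ω)) μ)
    (hw2 : Integrable (fun ω => (w (σ ω)) ^ 2) μ)
    (hσ2w2 : Integrable (fun ω => (σ ω) ^ 2 * (w (σ ω)) ^ 2) μ)
    (hgw2xx : ∀ j k : Fin p,
      Integrable (fun ω =>
        (nonlinPart μ x f (x ω)) ^ 2 * (w (σ ω)) ^ 2 * (x ω j * x ω k)) μ)
    (hσ2w2xx : ∀ j k : Fin p,
      Integrable (fun ω => (σ ω) ^ 2 * (w (σ ω)) ^ 2 * (x ω j * x ω k)) μ)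
    (hcross : ∀ j k : Fin p,
      Integrable (fun ω =>
        nonlinPart μ x f (x ω) * σ ω * ε ω * (w (σ ω)) ^ 2 * (x ω j * x ω k)) μ)
    (hσ2ε2 : ∀ j k : Fin p,
      Integrable (fun ω => (σ ω) ^ 2 * (ε ω) ^ 2 * (w (σ ω)) ^ 2 * (x ω j * x ω k)) μ)
    (hresid : ∀ j k : Fin p,
      Integrable (fun ω =>
        (y ω - x ω ⬝ᵥ bestLinear μ x f) ^ 2 * (w (σ ω)) ^ 2 * (x ω j * x ω k)) μ) :
    (∀ j k : Fin p,
      ∫ ω, ((nonlinPart μ x f (x ω)) ^ 2 + (σ ω) ^ 2) * (w (σ ω)) ^ 2 * (x ω j * x ω k) ∂μ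
        = ∫ ω, (y ω - x ω ⬝ᵥ bestLinear μ x f) ^ 2 * (w (σ ω)) ^ 2 * (x ω j * x ω k) ∂μ) ∧
    asympVar μ x σ f w
      = ((∫ ω, w (σ ω) ∂μ) ^ 2)⁻¹ •
          ((secondMoment μ x)⁻¹ *
            (Matrix.of fun j k =>
              ∫ ω, (y ω - x ω ⬝ᵥ bestLinear μ x f) ^ 2 * (w (σ ω)) ^ 2 * (x ω j * x ω k) ∂μ) *
            (secondMoment μ x)⁻¹) := by
  have hxc : ∀ j : Fin p, Measurable (fun v : Fin p → ℝ => v j) := fun j => measurable_pi_apply j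
  have hg : Measurable (nonlinPart μ x f) := by
    unfold nonlinPart
    simp only [dotProduct]
    fun_prop
  -- independence factorizations
  have key1 : ∀ (φ : ℝ → ℝ) (ψ : (Fin p → ℝ) × ℝ → ℝ), Measurable φ → Measurable ψ →
      ∫ ω, φ (ε ω) * ψ (x ω, σ ω) ∂μ = (∫ ω, φ (ε ω) ∂μ) * ∫ ω, ψ (x ω, σ ω) ∂μ := by
    intro φ ψ hφ hψ
    exact (hεindep.comp hφ hψ).integral_fun_mul_eq_mul_integral
      (hφ.comp hεmeas).aestronglyMeasurable
      (hψ.comp (hxmeas.prodMk hσmeas)).aestronglyMeasurable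
  have key2 : ∀ (φ : (Fin p → ℝ) → ℝ) (ψ : ℝ → ℝ), Measurable φ → Measurable ψ →
      ∫ ω, φ (x ω) * ψ (σ ω) ∂μ = (∫ ω, φ (x ω) ∂μ) * ∫ ω, ψ (σ ω) ∂μ := by
    intro φ ψ hφ hψ
    exact (hxσindep.comp hφ hψ).integral_fun_mul_eq_mul_integral
      (hφ.comp hxmeas).aestronglyMeasurable
      (hψ.comp hσmeas).aestronglyMeasurable
  have hsplit : ∀ j k : Fin p,
      ∫ ω, ((nonlinPart μ x f (x ω)) ^ 2 + (σ ω) ^ 2) * (w (σ ω)) ^ 2 * (x ω j * x ω k) ∂μ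
      = ∫ ω, (nonlinPart μ x f (x ω)) ^ 2 * (w (σ ω)) ^ 2 * (x ω j * x ω k) ∂μ
        + ∫ ω, (σ ω) ^ 2 * (w (σ ω)) ^ 2 * (x ω j * x ω k) ∂μ := by
    intro j k
    rw [← integral_add (hgw2xx j k) (hσ2w2xx j k)]
    congr 1; ext ω; ring
  have hfirst : ∀ j k : Fin p,
      ∫ ω, ((nonlinPart μ x f (x ω)) ^ 2 + (σ ω) ^ 2) * (w (σ ω)) ^ 2 * (x ω j * x ω k) ∂μ
        = ∫ ω, (y ω - x ω ⬝ᵥ bestLinear μ x f) ^ 2 * (w (σ ω)) ^ 2 * (x ω j * x ω k) ∂μ := by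
    intro j k
    have h0 : ∫ ω, nonlinPart μ x f (x ω) * σ ω * ε ω * (w (σ ω)) ^ 2 * (x ω j * x ω k) ∂μ
        = 0 := by
      have := key1 (fun e => e)
        (fun q => nonlinPart μ x f q.1 * q.2 * (w q.2) ^ 2 * (q.1 j * q.1 k))
        measurable_id (by fun_prop)
      rw [hεmean, zero_mul] at this
      rw [← this]
      congr 1; ext ω; ring
    have h1 : ∫ ω, (σ ω) ^ 2 * (ε ω) ^ 2 * (w (σ ω)) ^ 2 * (x ω j * x ω k) ∂μ
        = ∫ ω, (σ ω) ^ 2 * (w (σ ω)) ^ 2 * (x ω j * x ω k) ∂μ := by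
      have := key1 (fun e => e ^ 2)
        (fun q => q.2 ^ 2 * (w q.2) ^ 2 * (q.1 j * q.1 k))
        (by fun_prop) (by fun_prop)
      rw [hεvar, one_mul] at this
      rw [← this]
      congr 1; ext ω; ring
    have h2 : ∫ ω, (y ω - x ω ⬝ᵥ bestLinear μ x f) ^ 2 * (w (σ ω)) ^ 2 * (x ω j * x ω k) ∂μ
        = ∫ ω, ((nonlinPart μ x f (x ω)) ^ 2 * (w (σ ω)) ^ 2 * (x ω j * x ω k)
          + 2 * (nonlinPart μ x f (x ω) * σ ω * ε ω * (w (σ ω)) ^ 2 * (x ω j * x ω k)))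
          + (σ ω) ^ 2 * (ε ω) ^ 2 * (w (σ ω)) ^ 2 * (x ω j * x ω k) ∂μ := by
      congr 1; ext ω; rw [hy]; unfold nonlinPart; ring
    rw [hsplit, h2, integral_add (by exact (hgw2xx j k).add ((hcross j k).const_mul 2)) (hσ2ε2 j k),
      integral_add (hgw2xx j k) ((hcross j k).const_mul 2), integral_const_mul, h0, h1]
    ring
  refine ⟨hfirst, ?_⟩
  have hM : (Matrix.of fun j k =>
      ∫ ω, (y ω - x ω ⬝ᵥ bestLinear μ x f) ^ 2 * (w (σ ω)) ^ 2 * (x ω j * x ω k) ∂μ)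
      = (∫ ω, (w (σ ω)) ^ 2 ∂μ) • misspecMoment μ x f
        + (∫ ω, (σ ω) ^ 2 * (w (σ ω)) ^ 2 ∂μ) • secondMoment μ x := by
    ext j k
    have e1 := key2 (fun v => (nonlinPart μ x f v) ^ 2 * (v j * v k)) (fun s => (w s) ^ 2)
      (by fun_prop) (by fun_prop)
    have e2 := key2 (fun v => v j * v k) (fun s => s ^ 2 * (w s) ^ 2)
      (by fun_prop) (by fun_prop)
    simp only [Matrix.of_apply, Matrix.add_apply, Matrix.smul_apply, smul_eq_mul,
      misspecMoment, secondMoment]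
    rw [← hfirst j k, hsplit j k, mul_comm (∫ ω, (w (σ ω)) ^ 2 ∂μ), ← e1,
      mul_comm (∫ ω, (σ ω) ^ 2 * (w (σ ω)) ^ 2 ∂μ), ← e2]
    congr 1 <;> (congr 1; ext ω; ring)
  rw [hM, asympVar, Matrix.mul_add, Matrix.add_mul, Matrix.mul_smul, Matrix.mul_smul,
    Matrix.smul_mul, Matrix.smul_mul, Matrix.nonsing_inv_mul _ hfull, Matrix.one_mul]
end
end
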